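/- Fix an integer n ≥ 1, and let C ⊆ A be a ℂ-subalgebra with D(C) ⊆ C and x, y ∈ C. If the ℂ-linear span of the monomials x^i y^j with i + j ≥ n + 2 (the ideal ⟨x,y⟩^{n+2} of ℂ[x,y]) is contained in D(C ∩ ker D²) = m_1(C), then B_n ⊆ C. (This is the core of the theorem that every affine extension of SL₂ admits a 𝔾_a-equivariant birational morphism onto some P̂_n: choosing n with ⟨x,y⟩^{n+2} ⊆ m_1(C) yields B_n ⊆ C.) -/

import Mathlib

/-!
The heart of the matter is that `ker D = ℂ[x, y]`. If `w` is one of the generators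
`x^i y^(n+1-i) v`, `x^(n+1) u` of `B_n`, then `D w` is a monomial of degree `n + 2` in `x`, `y`,
so `D w = D c` for some `c ∈ C`, and `w - c ∈ ker D = ℂ[x, y] ⊆ C`.

For the kernel, `x v = 1 + y u` shows that every `f ∈ A` has a multiple `x^N f ∈ ℂ[x, y][u]`.
Since `D u = x` is not a zero divisor and the characteristic is zero, `u` is transcendental over
`ℂ[x, y]` and a polynomial in `u` killed by `D` is constant; so `x^N f ∈ ℂ[x, y]` if `D f = 0`.
Finally `x f ∈ ℂ[x, y]` forces `f ∈ ℂ[x, y]`: write `x f = x t + g(y)` with `t ∈ ℂ[x, y]`. On the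
curve `x = 0` in `SL₂` the function `y` is transcendental, so `g = 0`, `x (f - t) = 0` and `f = t`.
-/

open MvPolynomial

noncomputable section

/-- The ideal `⟨XV − YU − 1⟩` of `ℂ[X, Y, U, V]` (with `X = X 0`, `Y = X 1`, `U = X 2`,
`V = X 3`). -/
def sl2Ideal : Ideal (MvPolynomial (Fin 4) ℂ) :=
  Ideal.span {X 0 * X 3 - X 1 * X 2 - 1}

/-- The coordinate ring `A = ℂ[X,Y,U,V]/⟨XV − YU − 1⟩` of `SL₂` over `ℂ`. -/
abbrev SL2R : Type := MvPolynomial (Fin 4) ℂ ⧸ sl2Ideal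

/-- `x`, the image of `X` in `A`. -/
def sx : SL2R := Ideal.Quotient.mk sl2Ideal (X 0)
/-- `y`, the image of `Y` in `A`. -/
def sy : SL2R := Ideal.Quotient.mk sl2Ideal (X 1)
/-- `u`, the image of `U` in `A`. -/
def su : SL2R := Ideal.Quotient.mk sl2Ideal (X 2)
/-- `v`, the image of `V` in `A`. -/
def sv : SL2R := Ideal.Quotient.mk sl2Ideal (X 3)

/-- The ℂ-subalgebra `B_n ⊆ A` generated by `x`, `y`, the elements `x^i y^{n+1−i} v` for
`i = 0, …, n+1`, and `x^{n+1} u`; it is the coordinate ring of the affine extension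
`P̂_n` of `SL₂`. -/
def Bn (n : ℕ) : Subalgebra ℂ SL2R :=
  Algebra.adjoin ℂ ({sx, sy, sx ^ (n + 1) * su} ∪
    {w : SL2R | ∃ i ≤ n + 1, w = sx ^ i * sy ^ (n + 1 - i) * sv})

section Derivation

variable {R A : Type*} [CommRing R] [CommRing A] [Algebra R A]

lemma exists_coe_derivation_adjoin_eq (D : Derivation R A A) {s : Set A}
    (hs : ∀ a ∈ s, D a = 0) :
    ∃ D' : Derivation (Algebra.adjoin R s) A A, ⇑D' = D := by
  have hD (r : Algebra.adjoin R s) : D r = 0 :=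
    Derivation.eqOn_adjoin (D2 := 0) hs r.2
  let L : A →ₗ[Algebra.adjoin R s] A :=
    { toFun := D
      map_add' := map_add D
      map_smul' := fun r a ↦ by simp [Algebra.smul_def, hD] }
  exact ⟨Derivation.mk' L D.leibniz, rfl⟩

variable (D : Derivation R A A) {u : A}

lemma aeval_derivative_eq_zero_of_derivation_aeval_eq_zero (hu : D u ∈ nonZeroDivisors A)
    {P : Polynomial R} (hP : D (Polynomial.aeval u P) = 0) :
    Polynomial.aeval u (Polynomial.derivative P) = 0 := by
  rwa [D.map_aeval, smul_eq_mul, mul_right_mem_nonZeroDivisors_eq_zero_iff hu] at hP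

variable [IsAddTorsionFree R] [FaithfulSMul R A]

lemma transcendental_of_derivation_mem_nonZeroDivisors (hu : D u ∈ nonZeroDivisors A) :
    Transcendental R u := by
  rw [transcendental_iff]
  intro P hP
  induction hn : P.natDegree using Nat.strong_induction_on generalizing P with
  | _ n ih =>
    have hderiv : Polynomial.aeval u (Polynomial.derivative P) = 0 :=
      aeval_derivative_eq_zero_of_derivation_aeval_eq_zero D hu (by rw [hP, map_zero])
    have hconst : P = Polynomial.C (P.coeff 0) := by
      rcases Nat.eq_zero_or_pos n with rfl | hpos
      · exact Polynomial.eq_C_of_natDegree_eq_zero hn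
      · refine Polynomial.eq_C_of_derivative_eq_zero (ih _ ?_ _ hderiv rfl)
        exact hn ▸ Polynomial.natDegree_derivative_lt (by omega)
    rw [hconst, Polynomial.aeval_C, FaithfulSMul.algebraMap_eq_zero_iff] at hP
    rw [hconst, hP, map_zero]

lemma mem_bot_of_mem_adjoin_singleton_of_derivation_eq_zero
    (hu : D u ∈ nonZeroDivisors A) {b : A} (hb : b ∈ Algebra.adjoin R {u}) (hDb : D b = 0) :
    b ∈ (⊥ : Subalgebra R A) := by
  rw [Algebra.adjoin_singleton_eq_range_aeval] at hb
  obtain ⟨P, rfl⟩ := hb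
  have hderiv : Polynomial.derivative P = 0 :=
    transcendental_iff.1 (transcendental_of_derivation_mem_nonZeroDivisors D hu) _
      (aeval_derivative_eq_zero_of_derivation_aeval_eq_zero D hu hDb)
  rw [Polynomial.eq_C_of_derivative_eq_zero hderiv]
  exact ⟨P.coeff 0, (Polynomial.aeval_C u _).symm⟩

end Derivation

lemma exists_eq_mul_add_aeval_of_mem_adjoin_pair {R A : Type*} [CommSemiring R]
    [CommSemiring A] [Algebra R A] {a b s : A} (hs : s ∈ Algebra.adjoin R {a, b}) :
    ∃ t ∈ Algebra.adjoin R {a, b}, ∃ g : Polynomial R, s = a * t + Polynomial.aeval b g := by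
  have hb (g : Polynomial R) : Polynomial.aeval b g ∈ Algebra.adjoin R {a, b} :=
    Algebra.adjoin_mono (by simp) (Polynomial.aeval_mem_adjoin_singleton R b)
  induction hs using Algebra.adjoin_induction with
  | mem c hc =>
    rcases hc with rfl | rfl
    · exact ⟨1, one_mem _, 0, by simp⟩
    · exact ⟨0, zero_mem _, Polynomial.X, by simp⟩
  | algebraMap r => exact ⟨0, zero_mem _, Polynomial.C r, by simp⟩
  | add _ _ _ _ ihs ihs' =>
    obtain ⟨t, ht, g, rfl⟩ := ihs
    obtain ⟨t', ht', g', rfl⟩ := ihs'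
    exact ⟨t + t', add_mem ht ht', g + g', by rw [map_add]; ring⟩
  | mul _ _ _ hs' ihs ihs' =>
    obtain ⟨t, ht, g, rfl⟩ := ihs
    obtain ⟨t', ht', g', rfl⟩ := ihs'
    refine ⟨t * (a * t' + Polynomial.aeval b g') + Polynomial.aeval b g * t',
      add_mem (mul_mem ht hs') (mul_mem (hb g) ht'), g * g', ?_⟩
    rw [map_mul]
    ring

lemma sx_mul_sv_sub_sy_mul_su : sx * sv - sy * su = 1 := by
  have h : Ideal.Quotient.mk sl2Ideal (X 0 * X 3 - X 1 * X 2 - 1) = 0 :=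
    Ideal.Quotient.eq_zero_iff_mem.2 (Ideal.subset_span rfl)
  simp only [map_sub, map_mul, map_one] at h
  exact sub_eq_zero.1 h

lemma exists_algHom_of_det_eq_one {S : Type*} [CommRing S] [Algebra ℂ S] {a b c d : S}
    (h : a * d - b * c = 1) :
    ∃ φ : SL2R →ₐ[ℂ] S, φ sx = a ∧ φ sy = b ∧ φ su = c ∧ φ sv = d := by
  have hker : sl2Ideal ≤ RingHom.ker (aeval ![a, b, c, d] : MvPolynomial (Fin 4) ℂ →ₐ[ℂ] S) := by
    simp [sl2Ideal, Ideal.span_le, RingHom.mem_ker, h]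
  refine ⟨Ideal.Quotient.liftₐ sl2Ideal (aeval ![a, b, c, d]) fun p hp ↦ hker hp,
    ?_, ?_, ?_, ?_⟩ <;> exact (Ideal.Quotient.lift_mk _ _ _).trans (by simp)

lemma adjoin_coordinates_eq_top : Algebra.adjoin ℂ {sx, sy, su, sv} = ⊤ := by
  have hrange : Ideal.Quotient.mkₐ ℂ sl2Ideal '' Set.range X = {sx, sy, su, sv} := by
    ext w
    simp [Fin.exists_fin_succ, sx, sy, su, sv, eq_comm]
  rw [← hrange, ← AlgHom.map_adjoin, adjoin_range_X, Algebra.map_top, AlgHom.range_eq_top]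
  exact Ideal.Quotient.mkₐ_surjective ℂ sl2Ideal

lemma sx_mem_nonZeroDivisors : sx ∈ nonZeroDivisors SL2R := by
  rw [mem_nonZeroDivisors_iff_left]
  intro f hf
  obtain ⟨F, rfl⟩ := Ideal.Quotient.mk_surjective f
  rw [sx, ← map_mul, Ideal.Quotient.eq_zero_iff_mem, sl2Ideal, Ideal.mem_span_singleton] at hf
  rw [Ideal.Quotient.eq_zero_iff_mem, sl2Ideal, Ideal.mem_span_singleton]
  obtain ⟨G, hG⟩ := hf
  have hdet : ¬ (X 0 : MvPolynomial (Fin 4) ℂ) ∣ X 0 * X 3 - X 1 * X 2 - 1 := by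
    rintro ⟨H, hH⟩
    simpa using congrArg (eval 0) hH
  obtain ⟨H, rfl⟩ := (X_prime.dvd_or_dvd ⟨F, hG.symm⟩).resolve_left hdet
  exact ⟨H, mul_left_cancel₀ (X_ne_zero 0) (by rw [hG]; ring)⟩

open scoped Pointwise in
lemma exists_sx_pow_mul_mem_adjoin (f : SL2R) :
    ∃ N, sx ^ N * f ∈ Algebra.adjoin (Algebra.adjoin ℂ {sx, sy}) {su} := by
  set B := Algebra.adjoin (Algebra.adjoin ℂ {sx, sy}) {su}
  have hx : sx ∈ B := B.algebraMap_mem ⟨sx, Algebra.subset_adjoin (by simp)⟩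
  have hy : sy ∈ B := B.algebraMap_mem ⟨sy, Algebra.subset_adjoin (by simp)⟩
  have hu : su ∈ B := Algebra.self_mem_adjoin_singleton _ su
  have hv : sx * sv ∈ B := by
    rw [sub_eq_iff_eq_add.1 sx_mul_sv_sub_sy_mul_su]
    exact B.add_mem B.one_mem (B.mul_mem hy hu)
  have hgen : sx • ({sx, sy, su, sv} : Set SL2R) ⊆ (B.restrictScalars ℂ : Set SL2R) := by
    rintro _ ⟨w, rfl | rfl | rfl | rfl, rfl⟩
    exacts [B.mul_mem hx hx, B.mul_mem hx hy, B.mul_mem hx hu, hv]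
  obtain ⟨N, hN⟩ := Algebra.pow_smul_mem_of_smul_subset_of_mem_adjoin sx _ _ hgen
    (adjoin_coordinates_eq_top ▸ Algebra.mem_top : f ∈ _) hx
  exact ⟨N, hN N le_rfl⟩

lemma mem_adjoin_sx_sy_of_sx_mul_mem {f : SL2R} (hf : sx * f ∈ Algebra.adjoin ℂ {sx, sy}) :
    f ∈ Algebra.adjoin ℂ {sx, sy} := by
  obtain ⟨t, ht, g, hg⟩ := exists_eq_mul_add_aeval_of_mem_adjoin_pair hf
  obtain ⟨φ, hφx, hφy, -, -⟩ : ∃ φ : SL2R →ₐ[ℂ] RatFunc ℂ,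
      φ sx = 0 ∧ φ sy = RatFunc.X ∧ φ su = -RatFunc.X⁻¹ ∧ φ sv = 0 :=
    exists_algHom_of_det_eq_one (by simp [RatFunc.X_ne_zero])
  have hg0 : g = 0 := by
    refine transcendental_iff.1 RatFunc.transcendental_X g ?_
    simpa [hφx, hφy, ← Polynomial.aeval_algHom_apply] using (congrArg φ hg).symm
  have hft : sx * (f - t) = 0 := by rw [mul_sub, hg, hg0, map_zero, add_zero, sub_self]
  rw [mul_left_mem_nonZeroDivisors_eq_zero_iff sx_mem_nonZeroDivisors, sub_eq_zero] at hft
  exact hft ▸ ht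

lemma mem_adjoin_sx_sy_of_sx_pow_mul_mem {f : SL2R} {N : ℕ}
    (hf : sx ^ N * f ∈ Algebra.adjoin ℂ {sx, sy}) : f ∈ Algebra.adjoin ℂ {sx, sy} := by
  induction N with
  | zero => simpa using hf
  | succ N ih => exact ih (mem_adjoin_sx_sy_of_sx_mul_mem (by rwa [← mul_assoc, ← pow_succ']))

lemma mem_adjoin_sx_sy_of_derivation_eq_zero (D : Derivation ℂ SL2R SL2R)
    (hx : D sx = 0) (hy : D sy = 0) (hu : D su = sx) {f : SL2R} (hf : D f = 0) :
    f ∈ Algebra.adjoin ℂ {sx, sy} := by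
  obtain ⟨D', hD'⟩ := exists_coe_derivation_adjoin_eq D (s := {sx, sy}) (by simp [hx, hy])
  obtain ⟨N, hN⟩ := exists_sx_pow_mul_mem_adjoin f
  have hu' : D' su ∈ nonZeroDivisors SL2R := by
    rw [hD', hu]
    exact sx_mem_nonZeroDivisors
  have hDN : D' (sx ^ N * f) = 0 := by simp [hD', hx, hf, Derivation.leibniz_pow]
  have : IsAddTorsionFree (Algebra.adjoin ℂ {sx, sy}) := .of_module_rat _
  obtain ⟨s, hs⟩ := mem_bot_of_mem_adjoin_singleton_of_derivation_eq_zero D' hu' hN hDN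
  exact mem_adjoin_sx_sy_of_sx_pow_mul_mem (N := N) (by rw [← hs]; exact s.2)

theorem stmt12_general (n : ℕ) (D : Derivation ℂ SL2R SL2R)
    (hx : D sx = 0) (hy : D sy = 0) (hu : D su = sx) (hv : D sv = sy)
    (C : Subalgebra ℂ SL2R) (hxC : sx ∈ C) (hyC : sy ∈ C)
    (hcontain : ∀ i j : ℕ, i + j = n + 2 → ∃ c ∈ C, D c = sx ^ i * sy ^ j) :
    Bn n ≤ C := by
  have hpoly : Algebra.adjoin ℂ {sx, sy} ≤ C :=
    Algebra.adjoin_le (Set.pair_subset hxC hyC)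
  have hlift (w : SL2R) (i j : ℕ) (hij : i + j = n + 2) (hw : D w = sx ^ i * sy ^ j) : w ∈ C := by
    obtain ⟨c, hc, hDc⟩ := hcontain i j hij
    have hker : D (w - c) = 0 := by rw [map_sub, hw, hDc, sub_self]
    have hmem := hpoly (mem_adjoin_sx_sy_of_derivation_eq_zero D hx hy hu hker)
    exact sub_add_cancel w c ▸ C.add_mem hmem hc
  refine Algebra.adjoin_le ?_
  rintro w ((rfl | rfl | rfl) | ⟨i, hi, rfl⟩)
  · exact hxC
  · exact hyC
  · refine hlift _ (n + 2) 0 rfl ?_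
    simp only [Derivation.leibniz, Derivation.leibniz_pow, hx, hu, smul_eq_mul]
    ring
  · refine hlift _ i (n + 1 - i + 1) (by omega) ?_
    simp only [Derivation.leibniz, Derivation.leibniz_pow, hx, hy, hv, smul_eq_mul]
    ring

/-- For `n ≥ 1` and any `D`-stable ℂ-subalgebra `C ⊆ A` containing `x` and
`y`, if the ℂ-linear span of the monomials `x^i y^j` with `i + j ≥ n + 2` (the ideal
`⟨x,y⟩^{n+2}` of `ℂ[x,y]`) is contained in `m_1(C) = D(C ∩ ker D²)`, then `B_n ⊆ C`. -/
theorem stmt12 (n : ℕ) (hn : 1 ≤ n) (D : Derivation ℂ SL2R SL2R)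
    (hx : D sx = 0) (hy : D sy = 0) (hu : D su = sx) (hv : D sv = sy)
    (C : Subalgebra ℂ SL2R) (hC : ∀ c ∈ C, D c ∈ C) (hxC : sx ∈ C) (hyC : sy ∈ C)
    (hcontain : ↑(Submodule.span ℂ {a : SL2R | ∃ i j : ℕ,
        n + 2 ≤ i + j ∧ a = sx ^ i * sy ^ j}) ⊆
      {s : SL2R | ∃ c ∈ C, D (D c) = 0 ∧ D c = s}) :
    Bn n ≤ C :=
  stmt12_general n D hx hy hu hv C hxC hyC fun i j hij ↦
    (hcontain (Submodule.subset_span ⟨i, j, hij.ge, rfl⟩)).imp fun _ hc ↦ ⟨hc.1, hc.2.2⟩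

end
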